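/- Let H be a Hopf algebra over a field k, suppose r ∈ H satisfies the 1-dimensional partial comodule equations, set e := r·S(r), let A be the smallest right coideal subalgebra of H containing e, and let π : H → H/(H·A⁺) be the canonical k-linear quotient map. Then π(S(r)) is grouplike in the quotient, in the sense that (π ⊗ π)(Δ(S(r))) = π(S(r)) ⊗ π(S(r)) in (H/(H·A⁺)) ⊗ (H/(H·A⁺)). -/

import Mathlib

open TensorProduct

/-- The five 1-dimensional partial comodule equations for an element `r` of a Hopf
algebra `H`: `ε(r) = 1`; `r ⊗ r·S(r) = r₍₁₎ ⊗ r₍₂₎·S(r)`; `r·S(r₍₁₎) ⊗ r₍₂₎ = r·S(r) ⊗ r`;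
`r ⊗ S(r)·r = r₍₁₎ ⊗ S(r₍₂₎)·r`; `S(r)·r ⊗ r = S(r)·r₍₁₎ ⊗ r₍₂₎`. -/
def OneDimPCM (k : Type*) {H : Type*} [Field k] [Ring H] [HopfAlgebra k H] (r : H) : Prop :=
  Coalgebra.counit (R := k) r = 1
  ∧ r ⊗ₜ[k] (r * HopfAlgebra.antipode (R := k) r)
      = Coalgebra.comul (R := k) r * ((1 : H) ⊗ₜ[k] HopfAlgebra.antipode (R := k) r)
  ∧ (r ⊗ₜ[k] (1 : H)) *
        (LinearMap.rTensor H (HopfAlgebra.antipode (R := k)) (Coalgebra.comul (R := k) r))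
      = (r * HopfAlgebra.antipode (R := k) r) ⊗ₜ[k] r
  ∧ r ⊗ₜ[k] (HopfAlgebra.antipode (R := k) r * r)
      = (LinearMap.lTensor H (HopfAlgebra.antipode (R := k)) (Coalgebra.comul (R := k) r))
          * ((1 : H) ⊗ₜ[k] r)
  ∧ (HopfAlgebra.antipode (R := k) r * r) ⊗ₜ[k] r
      = ((HopfAlgebra.antipode (R := k) r) ⊗ₜ[k] (1 : H)) * Coalgebra.comul (R := k) r

section Helpers

open Coalgebra HopfAlgebra WithConv LinearMap

variable {k H : Type*} [Field k] [Ring H] [HopfAlgebra k H]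

theorem aux_incl_inv (f : H →ₐ[k] H ⊗[k] H) :
    (toConv (f.toLinearMap ∘ₗ antipode k) * toConv f.toLinearMap :
      WithConv (H →ₗ[k] H ⊗[k] H)) = 1 := by
  have h := LinearMap.algHom_comp_convMul_distrib f (toConv (antipode k (A := H))) (toConv LinearMap.id)
  rw [LinearMap.antipode_mul_id] at h
  apply WithConv.ext
  simp only [LinearMap.comp_id] at h
  rw [← h]
  ext c
  simp [LinearMap.convOne_def]

theorem aux_comul_antipode (a : H) {ι : Type*} (R : Coalgebra.Repr k a ι) :
    comul (R := k) (antipode k a) =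
      ∑ i ∈ R.index, antipode k (R.right i) ⊗ₜ[k] antipode k (R.left i) := by
  let iL : H →ₐ[k] H ⊗[k] H := Algebra.TensorProduct.includeLeft
  let iR : H →ₐ[k] H ⊗[k] H := Algebra.TensorProduct.includeRight
  have hd : (toConv (comul (R := k) (A := H)) : WithConv (H →ₗ[k] H ⊗[k] H))
      = toConv iL.toLinearMap * toConv iR.toLinearMap := by
    ext c
    rw [(ℛ k c).convMul_apply]
    simp [iL, iR, (ℛ k c).eq]
  have hG : (toConv (iR.toLinearMap ∘ₗ antipode k) * toConv (iL.toLinearMap ∘ₗ antipode k)) *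
      (toConv (comul (R := k) (A := H)) : WithConv (H →ₗ[k] H ⊗[k] H)) = 1 := by
    rw [hd, mul_assoc, ← mul_assoc (toConv (iL.toLinearMap ∘ₗ antipode k)), aux_incl_inv iL,
      one_mul, aux_incl_inv iR]
  have h := left_inv_eq_right_inv hG LinearMap.comul_right_inv
  have h2 := congrArg (fun f : WithConv (H →ₗ[k] H ⊗[k] H) => f a) h
  simp only at h2
  rw [R.convMul_apply] at h2
  simpa [iL, iR] using h2.symm

end Helpers

/-- if `r ∈ H` satisfies the 1-dimensional partial comodule equations,
`e := r·S(r)`, `A` is the smallest right coideal subalgebra containing `e` and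
`π : H → H/(H·A⁺)` is the quotient map, then `π(S(r))` is grouplike in the quotient
coalgebra: `(π ⊗ π)(Δ(S(r))) = π(S(r)) ⊗ π(S(r))`. -/
theorem stmt13 (k H : Type*) [Field k] [Ring H] [HopfAlgebra k H]
    (r : H) (hr : OneDimPCM k r)
    (e : H) (he : e = r * HopfAlgebra.antipode (R := k) r)
    (A : Subalgebra k H)
    (hA : ∀ a ∈ A, Coalgebra.comul (R := k) a ∈
      Submodule.span k {x : H ⊗[k] H | ∃ b ∈ A, ∃ h : H, x = b ⊗ₜ[k] h})
    (heA : e ∈ A)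
    (hmin : ∀ A' : Subalgebra k H,
      (∀ a ∈ A', Coalgebra.comul (R := k) a ∈
        Submodule.span k {x : H ⊗[k] H | ∃ b ∈ A', ∃ h : H, x = b ⊗ₜ[k] h}) →
      e ∈ A' → A ≤ A')
    (B : Submodule k H)
    (hB : B = Submodule.span k {x : H | ∃ (h : H) (a : H), a ∈ A
      ∧ Coalgebra.counit (R := k) a = 0 ∧ x = h * a}) :
    TensorProduct.map B.mkQ B.mkQ
        (Coalgebra.comul (R := k) (HopfAlgebra.antipode (R := k) r))
      = B.mkQ (HopfAlgebra.antipode (R := k) r) ⊗ₜ[k]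
          B.mkQ (HopfAlgebra.antipode (R := k) r) := by
  subst he
  obtain ⟨h1, -, h3, h4, -⟩ := hr
  have hπ : ∀ h : H, B.mkQ (h * (r * HopfAlgebra.antipode k r)) = B.mkQ h := by
    intro h
    rw [← sub_eq_zero, ← map_sub, Submodule.mkQ_apply, Submodule.Quotient.mk_eq_zero, hB]
    refine Submodule.subset_span ⟨h, r * HopfAlgebra.antipode k r - 1,
      A.sub_mem heA A.one_mem, ?_, by rw [mul_sub, mul_one]⟩
    simp [h1]
  have R := Coalgebra.Repr.arbitrary k r
  rw [aux_comul_antipode r R]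
  have h5 := congrArg ((TensorProduct.comm k (H ⧸ B) (H ⧸ B)).toLinearMap ∘ₗ TensorProduct.map
    (B.mkQ ∘ₗ HopfAlgebra.antipode k)
    (B.mkQ ∘ₗ LinearMap.mulRight k (HopfAlgebra.antipode k r))) h4
  rw [← R.eq] at h5
  simp only [map_sum, Finset.sum_mul, LinearMap.lTensor_tmul, Algebra.TensorProduct.tmul_mul_tmul,
    mul_one, LinearMap.comp_apply, TensorProduct.map_tmul, LinearEquiv.coe_coe,
    TensorProduct.comm_tmul, LinearMap.mulRight_apply, mul_assoc, hπ] at h5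
  simp only [map_sum, TensorProduct.map_tmul]
  exact h5.symm
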